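/- Let k be a field and A = ⊕_{n,w} A^n_w a dg k-algebra equipped with an additional 'weight' grading by w ∈ ℤ that is preserved by the differential and multiplicative (A^n_w · A^m_v ⊆ A^{n+m}_{w+v}, d(A^n_w) ⊆ A^{n+1}_w). If for every n the cohomology H^n(A) is pure of weight n (i.e. the weight-w part of H^n(A) vanishes for w ≠ n), then A is formal: A and H(A) (with zero differential) are connected by a chain of quasi-isomorphisms of dg algebras. -/

import Mathlib

/-- A differential graded `k`-algebra equipped with an additional multiplicative `weight`
grading preserved by the differential: `A = ⊕_{n,w} A^n_w`, with
`A^n_w · A^m_v ⊆ A^{n+m}_{w+v}` and `d(A^n_w) ⊆ A^{n+1}_w`. -/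
structure DGWAlg (k : Type) [Field k] where
  carrier : Type
  [ring : Ring carrier]
  [alg : Algebra k carrier]
  /-- `grading n w` is the piece of cohomological degree `n` and weight `w`. -/
  grading : ℤ → ℤ → Submodule k carrier
  internal : DirectSum.IsInternal (fun p : ℤ × ℤ => grading p.1 p.2)
  mul_mem : ∀ {n w m v : ℤ} {a b : carrier}, a ∈ grading n w → b ∈ grading m v →
    a * b ∈ grading (n + m) (w + v)
  /-- the differential, a `k`-linear map of degree `+1` -/
  d : carrier →ₗ[k] carrier
  d_squared : ∀ a, d (d a) = 0
  d_mem : ∀ {n w : ℤ} {a : carrier}, a ∈ grading n w → d a ∈ grading (n + 1) w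
  d_one : d 1 = 0
  /-- the graded Leibniz rule -/
  leibniz : ∀ {n w : ℤ} (a b : carrier), a ∈ grading n w →
    d (a * b) = d a * b + (((-1 : ℤˣ) ^ n : ℤˣ) : ℤ) • (a * d b)

attribute [instance] DGWAlg.ring DGWAlg.alg

/-- The degree-`n` part of a dg algebra (ignoring the weight grading). -/
def DGWAlg.deg {k : Type} [Field k] (A : DGWAlg k) (n : ℤ) : Submodule k A.carrier :=
  ⨆ w : ℤ, A.grading n w

/-- A morphism of dg algebras: a `k`-algebra homomorphism commuting with the differentials
and preserving the cohomological degree. -/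
def IsDGHom {k : Type} [Field k] (A B : DGWAlg k) (f : A.carrier →ₐ[k] B.carrier) : Prop :=
  (∀ a, f (A.d a) = B.d (f a)) ∧
    ∀ n : ℤ, (A.deg n).map f.toLinearMap ≤ B.deg n

/-- A morphism of dg algebras is a quasi-isomorphism if it induces a bijection on
cohomology: injectivity and surjectivity on cohomology classes, stated elementwise. -/
def IsQuasiIso {k : Type} [Field k] (A B : DGWAlg k) (f : A.carrier →ₐ[k] B.carrier) : Prop :=
  (∀ a : A.carrier, A.d a = 0 → (∃ b, B.d b = f a) → ∃ x, A.d x = a) ∧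
    (∀ b : B.carrier, B.d b = 0 → ∃ a : A.carrier, A.d a = 0 ∧ ∃ c, B.d c = b - f a)

/-!
Let `B ⊆ A` consist of all of `A^n_w` for `w > n`, of the cocycles for `w = n`, and of zero for
`w < n`. A primitive of an element of bidegree `(n, w)` can be taken of bidegree `(n - 1, w)`, so
`B` contains every primitive it could need, and it contains every cocycle of weight equal to its
degree; by purity these represent all of the cohomology, so `B → A` is a quasi-isomorphism. In `B`,
the coboundaries of bidegrees `(n, n)` together with everything above the diagonal form a dg ideal
containing the image of the differential. The quotient by it is `⊕ H^n(A)_n` with zero differential,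
and by purity again nothing is lost.
-/

open DirectSum

section HomogeneousComponents

variable {ι R M N : Type*} [DecidableEq ι] [Semiring R] [AddCommMonoid M] [Module R M]
  [AddCommMonoid N] [Module R N] (ℳ : ι → Submodule R M) [Decomposition ℳ]

/-- The `i`-th component of an element of a graded module `⊕ ℳ i`, as a linear endomorphism of the
module. -/
def homogeneousComponent (i : ι) : M →ₗ[R] M :=
  (ℳ i).subtype ∘ₗ component R ι (fun j => ℳ j) i ∘ₗ (decomposeLinearEquiv ℳ).toLinearMap

theorem homogeneousComponent_apply (i : ι) (x : M) :
    homogeneousComponent ℳ i x = decompose ℳ x i :=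
  rfl

theorem homogeneousComponent_mem (i : ι) (x : M) : homogeneousComponent ℳ i x ∈ ℳ i :=
  SetLike.coe_mem _

variable {ℳ}

theorem homogeneousComponent_of_mem {i : ι} {x : M} (hx : x ∈ ℳ i) :
    homogeneousComponent ℳ i x = x :=
  decompose_of_mem_same ℳ hx

theorem homogeneousComponent_of_mem_ne {i j : ι} {x : M} (hx : x ∈ ℳ j) (hij : i ≠ j) :
    homogeneousComponent ℳ i x = 0 :=
  decompose_of_mem_ne ℳ hx hij.symm

theorem mem_of_homogeneousComponent_mem {P : Submodule R M} {x : M}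
    (h : ∀ i, homogeneousComponent ℳ i x ∈ P) : x ∈ P := by
  classical
  rw [← sum_support_decompose ℳ x]
  exact sum_mem fun i _ => h i

theorem homogeneousComponent_mem_of_mem_iSup {X : ι → Submodule R M} (hX : ∀ i, X i ≤ ℳ i)
    {x : M} (hx : x ∈ ⨆ i, X i) (i : ι) : homogeneousComponent ℳ i x ∈ X i := by
  suffices h : ⨆ j, X j ≤ (X i).comap (homogeneousComponent ℳ i) from h hx
  refine iSup_le fun j y hy => ?_
  rw [Submodule.mem_comap]
  by_cases hij : i = j
  · subst hij
    rwa [homogeneousComponent_of_mem (hX i hy)]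
  · rw [homogeneousComponent_of_mem_ne (hX j hy) hij]
    exact zero_mem _

theorem map_homogeneousComponent {κ : Type*} [DecidableEq κ] {𝒩 : κ → Submodule R N}
    [Decomposition 𝒩] {f : M →ₗ[R] N} {σ : ι → κ} (hσ : σ.Injective)
    (hf : ∀ i, ∀ x ∈ ℳ i, f x ∈ 𝒩 (σ i)) (i : ι) (x : M) :
    f (homogeneousComponent ℳ i x) = homogeneousComponent 𝒩 (σ i) (f x) := by
  suffices h : f ∘ₗ homogeneousComponent ℳ i = homogeneousComponent 𝒩 (σ i) ∘ₗ f from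
    LinearMap.congr_fun h x
  refine decompose_lhom_ext ℳ fun j => LinearMap.ext fun ⟨y, hy⟩ => ?_
  change f (homogeneousComponent ℳ i y) = homogeneousComponent 𝒩 (σ i) (f y)
  by_cases hij : i = j
  · subst hij
    rw [homogeneousComponent_of_mem hy, homogeneousComponent_of_mem (hf i y hy)]
  · rw [homogeneousComponent_of_mem_ne hy hij, map_zero,
      homogeneousComponent_of_mem_ne (hf j y hy) (hσ.ne hij)]

end HomogeneousComponents

section InducedGradings

variable {ι R M N : Type*} [DecidableEq ι] [Ring R] [AddCommGroup M] [Module R M]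
  [AddCommGroup N] [Module R N] {ℳ : ι → Submodule R M} [Decomposition ℳ]

theorem isInternal_comap_of_injective {f : N →ₗ[R] M} (hf : Function.Injective f)
    (hrange : SetLike.IsHomogeneous ℳ (LinearMap.range f)) :
    IsInternal fun i => (ℳ i).comap f := by
  have hℳ := (isInternal_submodule_iff_iSupIndep_and_iSup_eq_top ℳ).1 (Decomposition.isInternal ℳ)
  rw [isInternal_submodule_iff_iSupIndep_and_iSup_eq_top]
  constructor
  · intro i
    rw [Submodule.disjoint_def]
    intro x hx hx'
    have hmap : (⨆ j, ⨆ (_ : j ≠ i), (ℳ j).comap f) ≤ (⨆ j, ⨆ (_ : j ≠ i), ℳ j).comap f :=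
      iSup₂_le fun j hj => Submodule.comap_mono (le_iSup₂_of_le j hj le_rfl)
    exact hf (((Submodule.disjoint_def.1 (hℳ.1 i) _ hx (hmap hx')).trans (map_zero f).symm))
  · rw [eq_top_iff]
    intro x _
    suffices h : f x ∈ (⨆ i, (ℳ i).comap f).map f by
      obtain ⟨y, hy, hyx⟩ := h
      rwa [← hf hyx]
    refine mem_of_homogeneousComponent_mem (ℳ := ℳ) fun i => ?_
    obtain ⟨y, hy⟩ := hrange i (LinearMap.mem_range_self f x)
    refine ⟨y, Submodule.mem_iSup_of_mem i ?_, hy⟩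
    rw [Submodule.mem_comap, hy]
    exact SetLike.coe_mem _

theorem isInternal_map_of_surjective {f : M →ₗ[R] N} (hf : Function.Surjective f)
    (hker : SetLike.IsHomogeneous ℳ (LinearMap.ker f)) :
    IsInternal fun i => (ℳ i).map f := by
  have hℳ := (isInternal_submodule_iff_iSupIndep_and_iSup_eq_top ℳ).1 (Decomposition.isInternal ℳ)
  rw [isInternal_submodule_iff_iSupIndep_and_iSup_eq_top]
  constructor
  · intro i
    rw [Submodule.disjoint_def]
    rintro _ ⟨x, hx, rfl⟩ hx'
    simp only [← Submodule.map_iSup] at hx'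
    obtain ⟨y, hy, hyx⟩ := hx'
    have hcompy : homogeneousComponent ℳ i y = 0 := by
      suffices h : (⨆ j, ⨆ (_ : j ≠ i), ℳ j) ≤ LinearMap.ker (homogeneousComponent ℳ i) from h hy
      exact iSup₂_le fun j hj z hz => homogeneousComponent_of_mem_ne hz hj.symm
    have hcomp : homogeneousComponent ℳ i (x - y) = x := by
      rw [map_sub, hcompy, sub_zero, homogeneousComponent_of_mem hx]
    have hxy : x - y ∈ LinearMap.ker f := by rw [LinearMap.mem_ker, map_sub, hyx, sub_self]
    have hfx := hker i hxy
    rwa [← homogeneousComponent_apply, hcomp] at hfx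
  · rw [← Submodule.map_iSup, hℳ.2, Submodule.map_top, LinearMap.range_eq_top.2 hf]

end InducedGradings

section GradedMul

variable {ι R A : Type*} [CommSemiring R] [Semiring A] [Algebra R A]

theorem one_mem_of_gradedMul [DecidableEq ι] [AddLeftCancelMonoid ι] (𝒜 : ι → Submodule R A)
    [Decomposition 𝒜] [SetLike.GradedMul 𝒜] : (1 : A) ∈ 𝒜 0 := by
  let e := homogeneousComponent 𝒜 0 1
  have he : ∀ i, ∀ x ∈ 𝒜 i, x * e = x := fun i x hx => by
    have hx' := map_homogeneousComponent (f := LinearMap.mulLeft R x) (add_right_injective i)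
      (fun j y hy => SetLike.mul_mem_graded hx hy) 0 1
    simpa [homogeneousComponent_of_mem hx] using hx'
  have hid : LinearMap.mulRight R e = LinearMap.id :=
    decompose_lhom_ext 𝒜 fun i => LinearMap.ext fun ⟨x, hx⟩ => he i x hx
  have hone : e = 1 := by simpa using LinearMap.congr_fun hid 1
  exact hone ▸ homogeneousComponent_mem 𝒜 0 1

theorem mul_mem_iSup [Add ι] {X Y Z : ι → Submodule R A}
    (h : ∀ ⦃i j a b⦄, a ∈ X i → b ∈ Y j → a * b ∈ Z (i + j)) {a b : A}
    (ha : a ∈ ⨆ i, X i) (hb : b ∈ ⨆ i, Y i) : a * b ∈ ⨆ i, Z i := by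
  suffices hle : (⨆ i, X i) * (⨆ i, Y i) ≤ ⨆ i, Z i from hle (Submodule.mul_mem_mul ha hb)
  simp only [Submodule.iSup_mul, Submodule.mul_iSup]
  exact iSup₂_le fun j i => Submodule.mul_le.2 fun a ha b hb =>
    Submodule.mem_iSup_of_mem (i + j) (h ha hb)

end GradedMul

namespace DGWAlg

variable {k : Type} [Field k] (A : DGWAlg k)

/-- The bigrading of `A` as a single family indexed by pairs (degree, weight), the form in which
the library's graded algebra applies to it. -/
abbrev bigrading (p : ℤ × ℤ) : Submodule k A.carrier :=
  A.grading p.1 p.2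

noncomputable instance : Decomposition A.bigrading :=
  A.internal.chooseDecomposition

instance : SetLike.GradedMul A.bigrading :=
  ⟨fun _ _ _ _ ha hb => A.mul_mem ha hb⟩

theorem d_homogeneousComponent (n w : ℤ) (a : A.carrier) :
    A.d (homogeneousComponent A.bigrading (n, w) a) =
      homogeneousComponent A.bigrading (n + 1, w) (A.d a) :=
  map_homogeneousComponent (ℳ := A.bigrading) (𝒩 := A.bigrading)
    (σ := fun p => (p.1 + 1, p.2)) (fun p q h => by simpa [Prod.ext_iff] using h)
    (fun _ _ ha => A.d_mem ha) (n, w) a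

variable {A}

theorem d_homogeneousComponent_eq_zero {a : A.carrier} (ha : A.d a = 0) (p : ℤ × ℤ) :
    A.d (homogeneousComponent A.bigrading p a) = 0 := by
  rw [d_homogeneousComponent, ha, map_zero]

theorem exists_mem_grading_d_eq {n w : ℤ} {a : A.carrier} (ha : a ∈ A.grading n w)
    (ha' : ∃ b, A.d b = a) : ∃ b ∈ A.grading (n - 1) w, A.d b = a := by
  obtain ⟨b, rfl⟩ := ha'
  refine ⟨homogeneousComponent A.bigrading (n - 1, w) b,
    homogeneousComponent_mem A.bigrading (n - 1, w) b, ?_⟩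
  rw [d_homogeneousComponent, sub_add_cancel]
  exact homogeneousComponent_of_mem (ℳ := A.bigrading) (i := (n, w)) ha

theorem d_mul_of_d_right_eq_zero (a : A.carrier) {b : A.carrier} (hb : A.d b = 0) :
    A.d (a * b) = A.d a * b := by
  suffices h : A.d ∘ₗ LinearMap.mulRight k b = LinearMap.mulRight k b ∘ₗ A.d from
    LinearMap.congr_fun h a
  refine decompose_lhom_ext A.bigrading fun p => LinearMap.ext fun ⟨x, hx⟩ => ?_
  change A.d (x * b) = A.d x * b
  rw [A.leibniz x b hx, hb, mul_zero, smul_zero, add_zero]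

theorem mul_d_mem_range_d {n w : ℤ} {a : A.carrier} (ha : a ∈ A.grading n w) (hda : A.d a = 0)
    (c : A.carrier) : a * A.d c ∈ LinearMap.range A.d := by
  have hleibniz := A.leibniz a c ha
  rw [hda, zero_mul, zero_add] at hleibniz
  rcases Int.units_eq_one_or ((-1) ^ n) with h | h <;> rw [h] at hleibniz
  · exact ⟨a * c, by simpa using hleibniz⟩
  · exact ⟨-(a * c), by simpa [neg_eq_iff_eq_neg] using hleibniz⟩

/-- A morphism of dg algebras that preserves the weight as well as the degree. -/
structure IsBigradedDGHom (A B : DGWAlg k) (f : A.carrier →ₐ[k] B.carrier) : Prop where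
  map_d : ∀ a, f (A.d a) = B.d (f a)
  map_mem : ∀ {n w : ℤ} {a : A.carrier}, a ∈ A.grading n w → f a ∈ B.grading n w

namespace IsBigradedDGHom

variable {B : DGWAlg k} {f : A.carrier →ₐ[k] B.carrier}

theorem isDGHom (hf : IsBigradedDGHom A B f) : IsDGHom A B f := by
  refine ⟨hf.map_d, fun n => ?_⟩
  rw [deg, deg, Submodule.map_iSup]
  exact iSup_mono fun w => Submodule.map_le_iff_le_comap.2 fun a ha => hf.map_mem ha

theorem map_homogeneousComponent (hf : IsBigradedDGHom A B f) (p : ℤ × ℤ) (a : A.carrier) :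
    f (homogeneousComponent A.bigrading p a) = homogeneousComponent B.bigrading p (f a) :=
  _root_.map_homogeneousComponent (ℳ := A.bigrading) (𝒩 := B.bigrading) (f := f.toLinearMap)
    Function.injective_id (fun _ _ ha => hf.map_mem ha) p a

theorem isQuasiIso (hf : IsBigradedDGHom A B f)
    (hinj : ∀ n w : ℤ, ∀ a ∈ A.grading n w, A.d a = 0 → (∃ b, B.d b = f a) → ∃ x, A.d x = a)
    (hsurj : ∀ n w : ℤ, ∀ b ∈ B.grading n w, B.d b = 0 →
      ∃ a, A.d a = 0 ∧ ∃ c, B.d c = b - f a) :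
    IsQuasiIso A B f := by
  constructor
  · rintro a ha ⟨b, hb⟩
    change a ∈ LinearMap.range A.d
    refine mem_of_homogeneousComponent_mem (ℳ := A.bigrading) fun ⟨n, w⟩ => ?_
    refine hinj n w _ (homogeneousComponent_mem A.bigrading (n, w) a)
      (d_homogeneousComponent_eq_zero ha _) ⟨homogeneousComponent B.bigrading (n - 1, w) b, ?_⟩
    rw [d_homogeneousComponent, sub_add_cancel, hb, hf.map_homogeneousComponent]
  · intro b hb
    suffices h : b ∈ (LinearMap.ker A.d).map f.toLinearMap ⊔ LinearMap.range B.d by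
      obtain ⟨_, ⟨a, ha, rfl⟩, _, ⟨c, rfl⟩, rfl⟩ := Submodule.mem_sup.1 h
      exact ⟨a, ha, c, (add_sub_cancel_left (f a) (B.d c)).symm⟩
    refine mem_of_homogeneousComponent_mem (ℳ := B.bigrading) fun ⟨n, w⟩ => ?_
    obtain ⟨a, ha, c, hc⟩ := hsurj n w _ (homogeneousComponent_mem B.bigrading (n, w) b)
      (d_homogeneousComponent_eq_zero hb _)
    exact Submodule.mem_sup.2 ⟨f a, ⟨a, ha, rfl⟩, B.d c, ⟨c, rfl⟩, by rw [hc, add_sub_cancel]⟩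

end IsBigradedDGHom

variable (A)

/-- The dg algebra structure induced on a homogeneous subalgebra of `A` closed under the
differential. -/
def ofSubalgebra (S : Subalgebra k A.carrier) (hS : SetLike.IsHomogeneous A.bigrading S)
    (hd : ∀ a ∈ S, A.d a ∈ S) : DGWAlg k where
  carrier := S
  grading n w := (A.grading n w).comap S.val.toLinearMap
  internal := isInternal_comap_of_injective (ℳ := A.bigrading) (f := S.val.toLinearMap)
    Subtype.val_injective fun p _ ⟨b, hb⟩ => ⟨⟨_, hS p (hb ▸ b.2)⟩, rfl⟩
  mul_mem ha hb := A.mul_mem ha hb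
  d := A.d.restrict (p := Subalgebra.toSubmodule S) (q := Subalgebra.toSubmodule S) hd
  d_squared a := Subtype.ext (A.d_squared a)
  d_mem ha := A.d_mem ha
  d_one := Subtype.ext A.d_one
  leibniz a b ha := Subtype.ext ((A.leibniz (a : A.carrier) b ha).trans
    (congrArg _ (map_zsmul S.val _
    (a * A.d.restrict (p := Subalgebra.toSubmodule S) (q := Subalgebra.toSubmodule S) hd b)).symm))

theorem isBigradedDGHom_val (S : Subalgebra k A.carrier)
    (hS : SetLike.IsHomogeneous A.bigrading S) (hd : ∀ a ∈ S, A.d a ∈ S) :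
    IsBigradedDGHom (A.ofSubalgebra S hS hd) A S.val :=
  ⟨fun _ => rfl, fun ha => ha⟩

/-- The dg algebra structure induced on the quotient of `A` by a homogeneous two-sided ideal closed
under the differential. -/
def quotient (I : Ideal A.carrier) [I.IsTwoSided] (hI : SetLike.IsHomogeneous A.bigrading I)
    (hd : ∀ a ∈ I, A.d a ∈ I) : DGWAlg k where
  carrier := A.carrier ⧸ I
  grading n w := (A.grading n w).map (Ideal.Quotient.mkₐ k I).toLinearMap
  internal := isInternal_map_of_surjective (ℳ := A.bigrading)
    (f := (Ideal.Quotient.mkₐ k I).toLinearMap) (Ideal.Quotient.mkₐ_surjective k I)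
    fun p _ ha => Ideal.Quotient.eq_zero_iff_mem.2 (hI p (Ideal.Quotient.eq_zero_iff_mem.1 ha))
  mul_mem := by
    rintro n w m v _ _ ⟨a, ha, rfl⟩ ⟨b, hb, rfl⟩
    exact ⟨a * b, A.mul_mem ha hb, map_mul (Ideal.Quotient.mkₐ k I) a b⟩
  d := (I.restrictScalars k).mapQ (I.restrictScalars k) A.d hd
  d_squared := by
    intro a
    obtain ⟨a, rfl⟩ := Ideal.Quotient.mkₐ_surjective k I a
    exact congrArg (Ideal.Quotient.mkₐ k I) (A.d_squared a)
  d_mem := by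
    rintro n w _ ⟨a, ha, rfl⟩
    exact ⟨A.d a, A.d_mem ha, rfl⟩
  d_one := congrArg (Ideal.Quotient.mkₐ k I) A.d_one
  leibniz := by
    rintro n w _ b ⟨a, ha, rfl⟩
    obtain ⟨b, rfl⟩ := Ideal.Quotient.mkₐ_surjective k I b
    exact (congrArg (Ideal.Quotient.mkₐ k I) (A.leibniz a b ha)).trans
      ((map_add _ _ _).trans (congrArg _ (map_zsmul (Ideal.Quotient.mkₐ k I) _ (a * A.d b))))

theorem isBigradedDGHom_mk (I : Ideal A.carrier) [I.IsTwoSided]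
    (hI : SetLike.IsHomogeneous A.bigrading I) (hd : ∀ a ∈ I, A.d a ∈ I) :
    IsBigradedDGHom A (A.quotient I hI hd) (Ideal.Quotient.mkₐ k I) :=
  ⟨fun _ => rfl, fun ha => ⟨_, ha, rfl⟩⟩

section Truncation

/-- The bidegree `(n, w)` piece of the truncation by weight: all of `A^n_w` if `w > n`, the
cocycles if `w = n`, and zero if `w < n`. -/
def truncPiece (p : ℤ × ℤ) : Submodule k A.carrier :=
  A.bigrading p ⊓ (⨅ _ : p.2 < p.1, ⊥) ⊓ ⨅ _ : p.2 = p.1, LinearMap.ker A.d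

/-- The bidegree `(n, w)` piece of the dg ideal of the truncation whose quotient is
`⊕ H^n(A)_n`: as `truncPiece`, but with coboundaries in place of cocycles for `w = n`. -/
def truncIdealPiece (p : ℤ × ℤ) : Submodule k A.carrier :=
  A.truncPiece p ⊓ ⨅ _ : p.2 = p.1, LinearMap.range A.d

variable {A}

theorem mem_truncPiece {p : ℤ × ℤ} {a : A.carrier} :
    a ∈ A.truncPiece p ↔ a ∈ A.bigrading p ∧ (p.2 < p.1 → a = 0) ∧ (p.2 = p.1 → A.d a = 0) := by
  simp [truncPiece, and_assoc]

theorem mem_truncIdealPiece {p : ℤ × ℤ} {a : A.carrier} :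
    a ∈ A.truncIdealPiece p ↔ a ∈ A.truncPiece p ∧ (p.2 = p.1 → a ∈ LinearMap.range A.d) := by
  simp [truncIdealPiece]

variable (A) in
theorem truncPiece_le (p : ℤ × ℤ) : A.truncPiece p ≤ A.bigrading p :=
  fun _ ha => (mem_truncPiece.1 ha).1

variable (A) in
theorem truncIdealPiece_le_truncPiece (p : ℤ × ℤ) : A.truncIdealPiece p ≤ A.truncPiece p :=
  inf_le_left

theorem mem_truncPiece_of_lt {n w : ℤ} (hw : n < w) {a : A.carrier} (ha : a ∈ A.grading n w) :
    a ∈ A.truncPiece (n, w) :=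
  mem_truncPiece.2 ⟨ha, fun h => absurd h hw.not_gt, fun h => absurd h hw.ne'⟩

theorem mem_truncPiece_diagonal {n : ℤ} {a : A.carrier} (ha : a ∈ A.grading n n)
    (hda : A.d a = 0) : a ∈ A.truncPiece (n, n) :=
  mem_truncPiece.2 ⟨ha, fun h => absurd h (lt_irrefl n), fun _ => hda⟩

theorem d_mem_truncIdealPiece {p : ℤ × ℤ} {a : A.carrier} (ha : a ∈ A.truncPiece p) :
    A.d a ∈ A.truncIdealPiece (p.1 + 1, p.2) := by
  obtain ⟨hmem, hlow, hdiag⟩ := mem_truncPiece.1 ha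
  refine mem_truncIdealPiece.2 ⟨mem_truncPiece.2 ⟨A.d_mem hmem, fun h => ?_,
    fun _ => A.d_squared a⟩, fun _ => ⟨a, rfl⟩⟩
  rcases (Int.lt_add_one_iff.1 h).lt_or_eq with h | h
  · rw [hlow h, map_zero]
  · exact hdiag h

/-- Nonzero elements of the truncation have weight at least their degree, so a product lies on the
diagonal only if both factors do. -/
theorem mul_eq_zero_or_diagonal {p q : ℤ × ℤ} {a b : A.carrier} (ha : a ∈ A.truncPiece p)
    (hb : b ∈ A.truncPiece q) (h : (p + q).2 ≤ (p + q).1) :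
    a * b = 0 ∨ p.2 = p.1 ∧ q.2 = q.1 := by
  rw [Prod.fst_add, Prod.snd_add] at h
  rcases lt_or_ge p.2 p.1 with hp | hp
  · exact .inl (by rw [(mem_truncPiece.1 ha).2.1 hp, zero_mul])
  rcases lt_or_ge q.2 q.1 with hq | hq
  · exact .inl (by rw [(mem_truncPiece.1 hb).2.1 hq, mul_zero])
  exact .inr ⟨by omega, by omega⟩

theorem mul_mem_truncPiece {p q : ℤ × ℤ} {a b : A.carrier} (ha : a ∈ A.truncPiece p)
    (hb : b ∈ A.truncPiece q) : a * b ∈ A.truncPiece (p + q) := by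
  obtain ⟨hmema, -, hdiaga⟩ := mem_truncPiece.1 ha
  obtain ⟨hmemb, -, hdiagb⟩ := mem_truncPiece.1 hb
  refine mem_truncPiece.2 ⟨A.mul_mem hmema hmemb, fun h => ?_, fun h => ?_⟩
  · refine (mul_eq_zero_or_diagonal ha hb h.le).resolve_right fun ⟨hp, hq⟩ => h.ne ?_
    rw [Prod.fst_add, Prod.snd_add, hp, hq]
  · rcases mul_eq_zero_or_diagonal ha hb h.le with h0 | ⟨hp, hq⟩
    · rw [h0, map_zero]
    · rw [d_mul_of_d_right_eq_zero a (hdiagb hq), hdiaga hp, zero_mul]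

theorem mul_mem_truncIdealPiece_left {p q : ℤ × ℤ} {a b : A.carrier} (ha : a ∈ A.truncPiece p)
    (hb : b ∈ A.truncIdealPiece q) : a * b ∈ A.truncIdealPiece (p + q) := by
  obtain ⟨hb, hexact⟩ := mem_truncIdealPiece.1 hb
  refine mem_truncIdealPiece.2 ⟨mul_mem_truncPiece ha hb, fun h => ?_⟩
  rcases mul_eq_zero_or_diagonal ha hb h.le with h0 | ⟨hp, hq⟩
  · exact h0 ▸ zero_mem _
  · obtain ⟨hmem, -, hdiag⟩ := mem_truncPiece.1 ha
    obtain ⟨c, rfl⟩ := hexact hq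
    exact mul_d_mem_range_d hmem (hdiag hp) c

theorem mul_mem_truncIdealPiece_right {p q : ℤ × ℤ} {a b : A.carrier}
    (ha : a ∈ A.truncIdealPiece p) (hb : b ∈ A.truncPiece q) :
    a * b ∈ A.truncIdealPiece (p + q) := by
  obtain ⟨ha, hexact⟩ := mem_truncIdealPiece.1 ha
  refine mem_truncIdealPiece.2 ⟨mul_mem_truncPiece ha hb, fun h => ?_⟩
  rcases mul_eq_zero_or_diagonal ha hb h.le with h0 | ⟨hp, hq⟩
  · exact h0 ▸ zero_mem _
  · obtain ⟨c, rfl⟩ := hexact hp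
    exact ⟨c * b, d_mul_of_d_right_eq_zero c ((mem_truncPiece.1 hb).2.2 hq)⟩

variable (A)

/-- The underlying subalgebra of the truncation by weight. -/
def truncSubalgebra : Subalgebra k A.carrier :=
  (⨆ p, A.truncPiece p).toSubalgebra
    (Submodule.mem_iSup_of_mem (0, 0)
      (mem_truncPiece_diagonal (one_mem_of_gradedMul A.bigrading) A.d_one))
    fun _ _ ha hb => mul_mem_iSup (fun _ _ _ _ => mul_mem_truncPiece) ha hb

variable {A} in
theorem mem_truncSubalgebra {p : ℤ × ℤ} {a : A.carrier} (ha : a ∈ A.truncPiece p) :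
    a ∈ A.truncSubalgebra :=
  Submodule.mem_iSup_of_mem p ha

variable {A} in
theorem homogeneousComponent_mem_truncPiece {a : A.carrier} (ha : a ∈ A.truncSubalgebra)
    (p : ℤ × ℤ) : homogeneousComponent A.bigrading p a ∈ A.truncPiece p :=
  homogeneousComponent_mem_of_mem_iSup A.truncPiece_le ha p

theorem isHomogeneous_truncSubalgebra : SetLike.IsHomogeneous A.bigrading A.truncSubalgebra :=
  fun p _ ha => mem_truncSubalgebra (homogeneousComponent_mem_truncPiece ha p)

variable {A} in
theorem d_mem_iSup_truncIdealPiece {a : A.carrier} (ha : a ∈ A.truncSubalgebra) :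
    A.d a ∈ ⨆ p, A.truncIdealPiece p := by
  suffices h : ⨆ p, A.truncPiece p ≤ (⨆ p, A.truncIdealPiece p).comap A.d from h ha
  exact iSup_le fun p _ hx => Submodule.mem_iSup_of_mem _ (d_mem_truncIdealPiece hx)

/-- The truncation of `A` by weight, the intermediate dg algebra of the formality zig-zag. -/
def trunc : DGWAlg k :=
  A.ofSubalgebra A.truncSubalgebra A.isHomogeneous_truncSubalgebra fun _ ha =>
    iSup_mono A.truncIdealPiece_le_truncPiece (d_mem_iSup_truncIdealPiece ha)

/-- The inclusion of the truncation into `A`. -/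
def truncVal : A.trunc.carrier →ₐ[k] A.carrier :=
  A.truncSubalgebra.val

theorem isBigradedDGHom_truncVal : IsBigradedDGHom A.trunc A A.truncVal :=
  A.isBigradedDGHom_val _ _ _

/-- The dg ideal of the truncation whose pieces are the `truncIdealPiece`s. -/
def truncIdeal : Ideal A.trunc.carrier where
  carrier := {a | A.truncVal a ∈ ⨆ p, A.truncIdealPiece p}
  zero_mem' := zero_mem (⨆ p, A.truncIdealPiece p)
  add_mem' ha hb := Submodule.add_mem (⨆ p, A.truncIdealPiece p) ha hb
  smul_mem' a _ hb := mul_mem_iSup (fun _ _ _ _ => mul_mem_truncIdealPiece_left) a.2 hb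

instance : A.truncIdeal.IsTwoSided :=
  ⟨fun b ha => mul_mem_iSup (fun _ _ _ _ => mul_mem_truncIdealPiece_right) ha b.2⟩

variable {A} in
theorem mem_truncPiece_of_mem_grading {n w : ℤ} {a : A.trunc.carrier}
    (ha : a ∈ A.trunc.grading n w) : A.truncVal a ∈ A.truncPiece (n, w) := by
  rw [← homogeneousComponent_of_mem (ℳ := A.bigrading) (i := (n, w))
    (A.isBigradedDGHom_truncVal.map_mem ha)]
  exact homogeneousComponent_mem_truncPiece a.2 (n, w)

variable {A} in
theorem homogeneousComponent_mem_truncIdealPiece {a : A.trunc.carrier} (ha : a ∈ A.truncIdeal)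
    (p : ℤ × ℤ) : homogeneousComponent A.bigrading p (A.truncVal a) ∈ A.truncIdealPiece p :=
  homogeneousComponent_mem_of_mem_iSup
    (fun p => (A.truncIdealPiece_le_truncPiece p).trans (A.truncPiece_le p)) ha p

variable {A} in
theorem mem_truncIdealPiece_of_mem_grading {n w : ℤ} {a : A.trunc.carrier}
    (haI : a ∈ A.truncIdeal) (ha : a ∈ A.trunc.grading n w) :
    A.truncVal a ∈ A.truncIdealPiece (n, w) := by
  rw [← homogeneousComponent_of_mem (ℳ := A.bigrading) (i := (n, w))
    (A.isBigradedDGHom_truncVal.map_mem ha)]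
  exact homogeneousComponent_mem_truncIdealPiece haI (n, w)

theorem isHomogeneous_truncIdeal : SetLike.IsHomogeneous A.trunc.bigrading A.truncIdeal := by
  intro p a ha
  change A.truncVal (homogeneousComponent A.trunc.bigrading p a) ∈ ⨆ q, A.truncIdealPiece q
  rw [A.isBigradedDGHom_truncVal.map_homogeneousComponent]
  exact Submodule.mem_iSup_of_mem p (homogeneousComponent_mem_truncIdealPiece ha p)

variable {A} in
theorem trunc_d_mem_truncIdeal (a : A.trunc.carrier) : A.trunc.d a ∈ A.truncIdeal :=
  d_mem_iSup_truncIdealPiece a.2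

/-- The dg algebra `⊕ H^n(A)_n` of the cohomology classes whose weight equals their degree, encoded
as a quotient of the truncation. -/
def diagonalCohomology : DGWAlg k :=
  A.trunc.quotient A.truncIdeal A.isHomogeneous_truncIdeal fun a _ => trunc_d_mem_truncIdeal a

/-- The projection of the truncation onto the diagonal part of the cohomology of `A`. -/
def diagonalClass : A.trunc.carrier →ₐ[k] A.diagonalCohomology.carrier :=
  Ideal.Quotient.mkₐ k A.truncIdeal

theorem isBigradedDGHom_diagonalClass :
    IsBigradedDGHom A.trunc A.diagonalCohomology A.diagonalClass :=
  A.trunc.isBigradedDGHom_mk _ _ _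

variable {A} in
theorem diagonalClass_eq_zero_iff {a : A.trunc.carrier} :
    A.diagonalClass a = 0 ↔ a ∈ A.truncIdeal :=
  Ideal.Quotient.eq_zero_iff_mem

theorem diagonalCohomology_d : A.diagonalCohomology.d = 0 := by
  ext y
  obtain ⟨a, rfl⟩ : ∃ a, A.diagonalClass a = y := Ideal.Quotient.mkₐ_surjective k A.truncIdeal y
  rw [← A.isBigradedDGHom_diagonalClass.map_d]
  exact diagonalClass_eq_zero_iff.2 (trunc_d_mem_truncIdeal a)

end Truncation

section Purity

/-- Purity of the cohomology: `H^n(A)` is concentrated in weight `n`. -/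
def IsPure : Prop :=
  ∀ n w : ℤ, w ≠ n → ∀ a ∈ A.grading n w, A.d a = 0 → ∃ b, A.d b = a

variable {A}

/-- A primitive of a homogeneous element has degree one less and the same weight, so it lies in the
range `w > n` where truncation changes nothing. -/
theorem exists_trunc_d_eq {n w : ℤ} {a : A.trunc.carrier} (ha : a ∈ A.trunc.grading n w)
    (hexact : ∃ b, A.d b = A.truncVal a) : ∃ x, A.trunc.d x = a := by
  rcases lt_or_ge w n with hw | hw
  · have ha0 : a = 0 := Subtype.ext ((mem_truncPiece.1 (mem_truncPiece_of_mem_grading ha)).2.1 hw)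
    exact ⟨0, by rw [ha0, map_zero]⟩
  · obtain ⟨b, hb, hba⟩ :=
      exists_mem_grading_d_eq (A.isBigradedDGHom_truncVal.map_mem ha) hexact
    have hbS := mem_truncSubalgebra (mem_truncPiece_of_lt (by omega) hb)
    exact ⟨⟨b, hbS⟩, Subtype.ext hba⟩

theorem IsPure.isQuasiIso_truncVal (hA : A.IsPure) : IsQuasiIso A.trunc A A.truncVal := by
  refine A.isBigradedDGHom_truncVal.isQuasiIso (fun n w a ha _ => exists_trunc_d_eq ha)
    fun n w b hb hdb => ?_
  by_cases hw : w = n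
  · subst hw
    exact ⟨⟨b, mem_truncSubalgebra (mem_truncPiece_diagonal hb hdb)⟩, Subtype.ext hdb, 0,
      (map_zero A.d).trans (sub_self b).symm⟩
  · obtain ⟨c, rfl⟩ := hA n w hw b hb hdb
    exact ⟨0, map_zero _, c, by rw [map_zero, sub_zero]⟩

theorem IsPure.isQuasiIso_diagonalClass (hA : A.IsPure) :
    IsQuasiIso A.trunc A.diagonalCohomology A.diagonalClass := by
  refine A.isBigradedDGHom_diagonalClass.isQuasiIso ?_ ?_
  · rintro n w a ha hda ⟨b, hb⟩
    have haI : a ∈ A.truncIdeal := by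
      rw [← diagonalClass_eq_zero_iff, ← hb, diagonalCohomology_d, LinearMap.zero_apply]
    refine exists_trunc_d_eq ha ?_
    by_cases hw : w = n
    · exact (mem_truncIdealPiece.1 (mem_truncIdealPiece_of_mem_grading haI ha)).2 hw
    · refine hA n w hw _ (A.isBigradedDGHom_truncVal.map_mem ha) ?_
      rw [← A.isBigradedDGHom_truncVal.map_d, hda, map_zero]
  · rintro n w _ ⟨a, ha, rfl⟩ -
    change ∃ x, A.trunc.d x = 0 ∧ ∃ c, A.diagonalCohomology.d c =
      A.diagonalClass a - A.diagonalClass x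
    have haS := mem_truncPiece_of_mem_grading ha
    by_cases hw : w = n
    · exact ⟨a, Subtype.ext ((mem_truncPiece.1 haS).2.2 hw), 0, by rw [map_zero, sub_self]⟩
    · have haI : a ∈ A.truncIdeal :=
        Submodule.mem_iSup_of_mem (n, w) (mem_truncIdealPiece.2 ⟨haS, fun h => absurd h hw⟩)
      exact ⟨0, map_zero _, 0, by
        rw [diagonalClass_eq_zero_iff.2 haI, map_zero, map_zero, sub_zero]⟩

end Purity

end DGWAlg

/-- Let `k` be a field and `A` a dg `k`-algebra with an additional
multiplicative weight grading preserved by the differential.  If for every `n` the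
cohomology `H^n(A)` is pure of weight `n` (every cocycle of bidegree `(n, w)` with `w ≠ n`
is a coboundary), then `A` is formal: `A` is connected to a dg algebra with zero
differential (i.e. its cohomology `H(A)`) by a chain of quasi-isomorphisms of dg
algebras. -/
theorem formal_of_pure
    (k : Type) [Field k] (A : DGWAlg k)
    (hpure : ∀ n w : ℤ, w ≠ n → ∀ a ∈ A.grading n w, A.d a = 0 → ∃ b, A.d b = a) :
    ∃ (H B : DGWAlg k) (f : B.carrier →ₐ[k] A.carrier) (g : B.carrier →ₐ[k] H.carrier),
      H.d = 0 ∧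
      IsDGHom B A f ∧ IsDGHom B H g ∧ IsQuasiIso B A f ∧ IsQuasiIso B H g := by
  have hA : A.IsPure := hpure
  exact ⟨A.diagonalCohomology, A.trunc, A.truncVal, A.diagonalClass, A.diagonalCohomology_d,
    A.isBigradedDGHom_truncVal.isDGHom, A.isBigradedDGHom_diagonalClass.isDGHom,
    hA.isQuasiIso_truncVal, hA.isQuasiIso_diagonalClass⟩
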